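/- arXiv:math/9505202 — 2 statements merged into one kernel-verified Lean document; each statement's English description precedes it below -/
import Mathlib

section
/- Let f be a holomorphic function defined on a connected open set Ω in ℂ^p with values in ℂ^N. If the collection of all partial derivatives ∂^α f(χ), over all multi-indices α ∈ ℤ_+^p, spans ℂ^N for all χ in a dense open subset of Ω, then already the derivatives ∂^α f(χ) with |α| ≤ N−1 span ℂ^N for all χ in a dense open subset of Ω. -/
/-!
Let `S k x` be the span at `x` of the derivatives of `f` of order `< k`. Its rank is lower
semicontinuous in `x` and bounded, so every nonempty open set contains a point near which the ranks
of `S 0, …, S N` are all constant. If `S N` is a proper subspace there, then `N + 1` nested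
subspaces have ranks `< N` and two consecutive ones, `S k` and `S (k + 1)`, agree near that point.
Differentiating a section of a span of constant rank leads into the span of the generators and their
derivatives; hence all derivatives of `f` stay in the proper subspace `S k`, against the hypothesis.

A holomorphic map of several variables is smooth because `∂_v f` is locally the uniform limit of
difference quotients of `f`, and Cauchy's estimate makes uniform limits of holomorphic maps
holomorphic.
-/

/-- Iterated complex partial derivative along a list of coordinate directions;
a multi-index `α` corresponds to such a list of length `|α|`. -/
noncomputable def multiDeriv {p N : ℕ} :
    List (Fin p) → ((Fin p → ℂ) → (Fin N → ℂ)) → ((Fin p → ℂ) → (Fin N → ℂ))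
  | [], f => f
  | j :: L, f => fun x => fderiv ℂ (multiDeriv L f) x (Pi.single j 1)

open Filter Metric Module Set Topology
open scoped ContDiff

section VaryingSpan

variable {𝕜 F κ : Type*} [NontriviallyNormedField 𝕜] [CompleteSpace 𝕜]
  [NormedAddCommGroup F] [NormedSpace 𝕜 F]

theorem mem_span_of_tendsto_of_linearIndependent [Finite κ] {α : Type*} {l : Filter α} [l.NeBot]
    {g : κ → α → F} {w : κ → F} {u : α → F} {u₀ : F} (hw : LinearIndependent 𝕜 w)
    (hg : ∀ i, Tendsto (g i) l (𝓝 (w i))) (hu : Tendsto u l (𝓝 u₀))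
    (hmem : ∀ᶠ a in l, u a ∈ Submodule.span 𝕜 (range fun i => g i a)) :
    u₀ ∈ Submodule.span 𝕜 (range w) := by
  by_contra hu₀
  have hlim : Tendsto (fun a (o : Option κ) => o.casesOn' (u a) fun i => g i a) l
      (𝓝 fun o => o.casesOn' u₀ w) :=
    tendsto_pi_nhds.2 fun o => by cases o with
      | none => exact hu
      | some i => exact hg i
  have hindep : LinearIndependent 𝕜 fun o : Option κ => o.casesOn' u₀ w :=
    linearIndependent_option'.2 ⟨hw, hu₀⟩
  obtain ⟨a, ha, ha'⟩ := ((hlim.eventually hindep.eventually).and hmem).exists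
  exact (linearIndependent_option'.1 ha).2 ha'

theorem hasDerivAt_mem_of_eventually_mem_span [Finite κ] {g : κ → 𝕜 → F} {g' : κ → F}
    {h : 𝕜 → F} {h' : F} {t₀ : 𝕜} (hg : ∀ i, HasDerivAt (g i) (g' i) t₀)
    (hh : HasDerivAt h h' t₀) (hindep : LinearIndependent 𝕜 fun i => g i t₀)
    (hmem : ∀ᶠ t in 𝓝 t₀, h t ∈ Submodule.span 𝕜 (range fun i => g i t))
    {P : Submodule 𝕜 F} (hP : ∀ i, g i t₀ ∈ P) (hP' : ∀ i, g' i ∈ P) : h' ∈ P := by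
  cases nonempty_fintype κ
  obtain ⟨c, hc⟩ := (Submodule.mem_span_range_iff_exists_fun 𝕜).1 hmem.self_of_nhds
  -- Freezing the coefficients of `h t₀` makes the difference vanish at `t₀`, so that its slopes
  -- stay in the moving span.
  let u : 𝕜 → F := fun t => h t - ∑ i, c i • g i t
  have hu : HasDerivAt u (h' - ∑ i, c i • g' i) t₀ :=
    hh.sub (HasDerivAt.fun_sum fun i _ => (hg i).const_smul (c i))
  have hu₀ : u t₀ = 0 := by simp only [u, hc, sub_self]
  have hslope : ∀ᶠ t in 𝓝[≠] t₀, slope u t₀ t ∈ Submodule.span 𝕜 (range fun i => g i t) := by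
    filter_upwards [nhdsWithin_le_nhds hmem] with t ht
    rw [slope_def_module, hu₀, sub_zero]
    exact Submodule.smul_mem _ _ (Submodule.sub_mem _ ht
      ((Submodule.mem_span_range_iff_exists_fun 𝕜).2 ⟨c, rfl⟩))
  have hlimit : h' - ∑ i, c i • g' i ∈ Submodule.span 𝕜 (range fun i => g i t₀) :=
    mem_span_of_tendsto_of_linearIndependent hindep
      (fun i => (hg i).continuousAt.tendsto.mono_left nhdsWithin_le_nhds)
      (hasDerivAt_iff_tendsto_slope.1 hu) hslope
  have hspan : Submodule.span 𝕜 (range fun i => g i t₀) ≤ P :=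
    Submodule.span_le.2 (range_subset_iff.2 hP)
  have hsum : ∑ i, c i • g' i ∈ P := P.sum_mem fun i _ => P.smul_mem _ (hP' i)
  simpa only [sub_add_cancel] using P.add_mem (hspan hlimit) hsum

variable [FiniteDimensional 𝕜 F]

theorem exists_eventually_linearIndependent {X : Type*} [TopologicalSpace X] {g : κ → X → F}
    {x₀ : X} (hg : ∀ i, ContinuousAt (g i) x₀) :
    ∃ a : Fin (finrank 𝕜 (Submodule.span 𝕜 (range fun i => g i x₀))) → κ,
      ∀ᶠ x in 𝓝 x₀, LinearIndependent 𝕜 fun j => g (a j) x := by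
  obtain ⟨b, hb, -, hindep⟩ := Submodule.exists_fun_fin_finrank_span_eq 𝕜 (range fun i => g i x₀)
  choose a ha using hb
  obtain rfl : (fun j => g (a j) x₀) = b := funext ha
  exact ⟨a, (continuousAt_pi.2 fun j => hg (a j)).eventually hindep.eventually⟩

theorem eventually_finrank_span_le {X : Type*} [TopologicalSpace X] {g : κ → X → F} {x₀ : X}
    (hg : ∀ i, ContinuousAt (g i) x₀) :
    ∀ᶠ x in 𝓝 x₀, finrank 𝕜 (Submodule.span 𝕜 (range fun i => g i x₀)) ≤
      finrank 𝕜 (Submodule.span 𝕜 (range fun i => g i x)) := by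
  obtain ⟨a, ha⟩ := exists_eventually_linearIndependent (𝕜 := 𝕜) hg
  filter_upwards [ha] with x hx
  calc finrank 𝕜 (Submodule.span 𝕜 (range fun i => g i x₀))
      = finrank 𝕜 (Submodule.span 𝕜 (range fun j => g (a j) x)) := by
        rw [finrank_span_eq_card hx, Fintype.card_fin]
    _ ≤ finrank 𝕜 (Submodule.span 𝕜 (range fun i => g i x)) :=
        Submodule.finrank_mono (Submodule.span_mono (range_comp_subset_range a (g · x)))

theorem exists_eventually_linearIndependent_span_eq {X : Type*} [TopologicalSpace X]
    {g : κ → X → F} {x₀ : X} (hg : ∀ i, ContinuousAt (g i) x₀)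
    (hrank : ∀ᶠ x in 𝓝 x₀, finrank 𝕜 (Submodule.span 𝕜 (range fun i => g i x)) =
      finrank 𝕜 (Submodule.span 𝕜 (range fun i => g i x₀))) :
    ∃ a : Fin (finrank 𝕜 (Submodule.span 𝕜 (range fun i => g i x₀))) → κ,
      ∀ᶠ x in 𝓝 x₀, (LinearIndependent 𝕜 fun j => g (a j) x) ∧
        Submodule.span 𝕜 (range fun j => g (a j) x) = Submodule.span 𝕜 (range fun i => g i x) := by
  obtain ⟨a, ha⟩ := exists_eventually_linearIndependent (𝕜 := 𝕜) hg
  refine ⟨a, ?_⟩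
  filter_upwards [ha, hrank] with x hx hxrank
  refine ⟨hx, Submodule.eq_of_le_of_finrank_eq
    (Submodule.span_mono (range_comp_subset_range a (g · x))) ?_⟩
  rw [finrank_span_eq_card hx, Fintype.card_fin, hxrank]

theorem fderiv_mem_of_eventually_mem_span {E : Type*} [NormedAddCommGroup E] [NormedSpace 𝕜 E]
    {g : κ → E → F} {h : E → F} {x₀ : E} (v : E) (hg : ∀ i, DifferentiableAt 𝕜 (g i) x₀)
    (hh : DifferentiableAt 𝕜 h x₀)
    (hrank : ∀ᶠ x in 𝓝 x₀, finrank 𝕜 (Submodule.span 𝕜 (range fun i => g i x)) =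
      finrank 𝕜 (Submodule.span 𝕜 (range fun i => g i x₀)))
    (hmem : ∀ᶠ x in 𝓝 x₀, h x ∈ Submodule.span 𝕜 (range fun i => g i x))
    {P : Submodule 𝕜 F} (hP : ∀ i, g i x₀ ∈ P) (hP' : ∀ i, fderiv 𝕜 (g i) x₀ v ∈ P) :
    fderiv 𝕜 h x₀ v ∈ P := by
  obtain ⟨a, ha⟩ :=
    exists_eventually_linearIndependent_span_eq (fun i => (hg i).continuousAt) hrank
  have hline : Tendsto (fun t : 𝕜 => x₀ + t • v) (𝓝 0) (𝓝 x₀) := by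
    have : ContinuousAt (fun t : 𝕜 => x₀ + t • v) 0 := by fun_prop
    simpa only [ContinuousAt, zero_smul, add_zero] using this
  refine hasDerivAt_mem_of_eventually_mem_span (t₀ := (0 : 𝕜))
    (fun j => (hg (a j)).hasFDerivAt.hasLineDerivAt v) (hh.hasFDerivAt.hasLineDerivAt v)
    ?_ ?_ (fun j => ?_) (fun j => hP' (a j))
  · simpa only [zero_smul, add_zero] using ha.self_of_nhds.1
  · filter_upwards [hline.eventually ha, hline.eventually hmem] with t ht htmem
    rwa [ht.2]
  · simpa only [zero_smul, add_zero] using hP (a j)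

end VaryingSpan

theorem exists_eventually_eq_of_eventually_le {X κ : Type*} [TopologicalSpace X] (s : Finset κ)
    {r : κ → X → ℕ} {O : Set X} (hO : IsOpen O) (hne : O.Nonempty)
    (hr : ∀ i ∈ s, ∀ x ∈ O, ∀ᶠ y in 𝓝 x, r i x ≤ r i y) {M : ℕ}
    (hM : ∀ i ∈ s, ∀ x ∈ O, r i x ≤ M) :
    ∃ y ∈ O, ∀ᶠ z in 𝓝 y, ∀ i ∈ s, r i z = r i y := by
  -- Where the sum is maximal, no summand can increase.
  have hbdd : BddAbove ((fun y => ∑ i ∈ s, r i y) '' O) :=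
    ⟨∑ _i ∈ s, M, forall_mem_image.2 fun y hy => Finset.sum_le_sum fun i hi => hM i hi y hy⟩
  obtain ⟨y, hy, hysup⟩ := Nat.sSup_mem (hne.image _) hbdd
  have hmax : ∀ z ∈ O, ∑ i ∈ s, r i z ≤ ∑ i ∈ s, r i y := fun z hz =>
    (le_csSup hbdd (mem_image_of_mem _ hz)).trans_eq hysup.symm
  refine ⟨y, hy, ?_⟩
  filter_upwards [hO.mem_nhds hy, (eventually_all_finset s).2 fun i hi => hr i hi y hy]
    with z hz hle i hi
  have hsum := (Finset.sum_le_sum hle).antisymm (hmax z hz)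
  exact ((Finset.sum_eq_sum_iff_of_le hle).1 hsum i hi).symm

theorem exists_lt_eq_succ_of_finrank_lt {K V : Type*} [DivisionRing K] [AddCommGroup V]
    [Module K V] [FiniteDimensional K V] {S : ℕ → Submodule K V} (hS : Monotone S) {n : ℕ}
    (hn : finrank K (S n) < n) : ∃ k < n, S k = S (k + 1) := by
  by_contra! hne
  have hlt : ∀ k < n, finrank K (S k) < finrank K (S (k + 1)) := fun k hk =>
    Submodule.finrank_lt_finrank_of_lt ((hS k.le_succ).lt_of_ne (hne k hk))
  have hle : ∀ k ≤ n, k ≤ finrank K (S k) := by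
    intro k
    induction k with
    | zero => exact fun _ => Nat.zero_le _
    | succ k ih => exact fun hk => (ih (by lia)).trans_lt (hlt k hk)
  exact (hle n le_rfl).not_gt hn

section DirectionalDerivatives

variable {𝕜 E F ι : Type*} [NontriviallyNormedField 𝕜]
  [NormedAddCommGroup E] [NormedSpace 𝕜 E] [NormedAddCommGroup F] [NormedSpace 𝕜 F]

variable (𝕜) in
/-- The iterated directional derivative of `f` along a word in the directions `e i`, the last
letter being applied first; coordinate directions give the iterated partial derivatives. -/
noncomputable def iteratedDirDeriv (e : ι → E) : List ι → (E → F) → E → F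
  | [], f => f
  | j :: L, f => fun x => fderiv 𝕜 (iteratedDirDeriv e L f) x (e j)

theorem contDiffOn_iteratedDirDeriv (e : ι → E) {Ω : Set E} (hΩ : IsOpen Ω) {f : E → F}
    (hf : ContDiffOn 𝕜 ∞ f Ω) (L : List ι) :
    ContDiffOn 𝕜 ∞ (iteratedDirDeriv 𝕜 e L f) Ω := by
  induction L with
  | nil => exact hf
  | cons j L ih => exact (ih.fderiv_of_isOpen hΩ (by simp)).clm_apply contDiffOn_const

theorem differentiableAt_iteratedDirDeriv (e : ι → E) {Ω : Set E} (hΩ : IsOpen Ω) {f : E → F}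
    (hf : ContDiffOn 𝕜 ∞ f Ω) {x : E} (hx : x ∈ Ω) (L : List ι) :
    DifferentiableAt 𝕜 (iteratedDirDeriv 𝕜 e L f) x :=
  ((contDiffOn_iteratedDirDeriv e hΩ hf L).differentiableOn (by simp)).differentiableAt
    (hΩ.mem_nhds hx)

variable (𝕜) in
/-- The span at `x` of the iterated directional derivatives of `f` of order strictly less than
`k`. With a strict bound the dimension is `0` at `k = 0`, so that `finrank 𝕜 F` strict growth
steps fill `F`. -/
noncomputable def lowOrderSpan (e : ι → E) (f : E → F) (k : ℕ) (x : E) : Submodule 𝕜 F :=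
  Submodule.span 𝕜 (range fun L : {L : List ι // L.length < k} => iteratedDirDeriv 𝕜 e L f x)

theorem iteratedDirDeriv_mem_lowOrderSpan (e : ι → E) (f : E → F) {k : ℕ} (x : E) {L : List ι}
    (hL : L.length < k) : iteratedDirDeriv 𝕜 e L f x ∈ lowOrderSpan 𝕜 e f k x :=
  Submodule.subset_span ⟨⟨L, hL⟩, rfl⟩

theorem lowOrderSpan_mono (e : ι → E) (f : E → F) (x : E) :
    Monotone fun k => lowOrderSpan 𝕜 e f k x := by
  intro k l hkl
  refine Submodule.span_le.2 (range_subset_iff.2 fun L => ?_)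
  exact iteratedDirDeriv_mem_lowOrderSpan e f x (L.2.trans_le hkl)

variable [CompleteSpace 𝕜] [FiniteDimensional 𝕜 F] {e : ι → E} {f : E → F} {Ω : Set E}

theorem eventually_finrank_lowOrderSpan_le (hΩ : IsOpen Ω) (hf : ContDiffOn 𝕜 ∞ f Ω) (k : ℕ)
    {x₀ : E} (hx₀ : x₀ ∈ Ω) :
    ∀ᶠ x in 𝓝 x₀, finrank 𝕜 (lowOrderSpan 𝕜 e f k x₀) ≤ finrank 𝕜 (lowOrderSpan 𝕜 e f k x) :=
  eventually_finrank_span_le fun L =>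
    (differentiableAt_iteratedDirDeriv e hΩ hf hx₀ L).continuousAt

theorem isOpen_setOf_lowOrderSpan_eq_top (hΩ : IsOpen Ω) (hf : ContDiffOn 𝕜 ∞ f Ω) (k : ℕ) :
    IsOpen {x ∈ Ω | lowOrderSpan 𝕜 e f k x = ⊤} := by
  refine isOpen_iff_mem_nhds.2 fun x ⟨hx, htop⟩ => ?_
  filter_upwards [hΩ.mem_nhds hx, eventually_finrank_lowOrderSpan_le (e := e) hΩ hf k hx]
    with y hy hle
  refine ⟨hy, Submodule.eq_top_of_finrank_eq ((Submodule.finrank_le _).antisymm ?_)⟩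
  rwa [htop, finrank_top] at hle

theorem iteratedDirDeriv_mem_lowOrderSpan_of_stable (hΩ : IsOpen Ω) (hf : ContDiffOn 𝕜 ∞ f Ω)
    {k d : ℕ} (hrank : ∀ x ∈ Ω, finrank 𝕜 (lowOrderSpan 𝕜 e f k x) = d)
    (hstable : ∀ x ∈ Ω, lowOrderSpan 𝕜 e f k x = lowOrderSpan 𝕜 e f (k + 1) x) (L : List ι) :
    ∀ x ∈ Ω, iteratedDirDeriv 𝕜 e L f x ∈ lowOrderSpan 𝕜 e f k x := by
  induction L with
  | nil =>
    intro x hx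
    rw [hstable x hx]
    exact iteratedDirDeriv_mem_lowOrderSpan e f x (Nat.succ_pos k)
  | cons j L ih =>
    intro x hx
    have hΩx : ∀ᶠ y in 𝓝 x, y ∈ Ω := hΩ.mem_nhds hx
    refine fderiv_mem_of_eventually_mem_span (e j)
      (g := fun K : {K : List ι // K.length < k} => iteratedDirDeriv 𝕜 e K f)
      (fun K => differentiableAt_iteratedDirDeriv e hΩ hf hx K)
      (differentiableAt_iteratedDirDeriv e hΩ hf hx L)
      (hΩx.mono fun y hy => (hrank y hy).trans (hrank x hx).symm) (hΩx.mono ih)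
      (fun K => iteratedDirDeriv_mem_lowOrderSpan e f x K.2) fun K => ?_
    rw [hstable x hx]
    exact iteratedDirDeriv_mem_lowOrderSpan e f x (L := j :: K) (Nat.succ_lt_succ K.2)

theorem exists_forall_lowOrderSpan_eq_succ {O : Set E} (hO : IsOpen O) (hne : O.Nonempty)
    (hf : ContDiffOn 𝕜 ∞ f O)
    (hlt : ∀ x ∈ O, finrank 𝕜 (lowOrderSpan 𝕜 e f (finrank 𝕜 F) x) < finrank 𝕜 F) :
    ∃ W ⊆ O, IsOpen W ∧ W.Nonempty ∧ ∃ k < finrank 𝕜 F, ∃ d,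
      (∀ x ∈ W, finrank 𝕜 (lowOrderSpan 𝕜 e f k x) = d) ∧
      ∀ x ∈ W, lowOrderSpan 𝕜 e f k x = lowOrderSpan 𝕜 e f (k + 1) x := by
  obtain ⟨y, hy, hconst⟩ := exists_eventually_eq_of_eventually_le
    (Finset.range (finrank 𝕜 F + 1)) (r := fun k x => finrank 𝕜 (lowOrderSpan 𝕜 e f k x)) hO hne
    (fun k _ _ hx => eventually_finrank_lowOrderSpan_le hO hf k hx)
    (M := finrank 𝕜 F) (fun k _ x _ => Submodule.finrank_le (lowOrderSpan 𝕜 e f k x))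
  obtain ⟨k, hk, hky⟩ : ∃ k < finrank 𝕜 F,
      lowOrderSpan 𝕜 e f k y = lowOrderSpan 𝕜 e f (k + 1) y :=
    exists_lt_eq_succ_of_finrank_lt (lowOrderSpan_mono e f y) (hlt y hy)
  obtain ⟨W, hW, hWopen, hyW⟩ := _root_.eventually_nhds_iff.1 ((hO.eventually_mem hy).and hconst)
  have hrank : ∀ x ∈ W, ∀ l ≤ finrank 𝕜 F,
      finrank 𝕜 (lowOrderSpan 𝕜 e f l x) = finrank 𝕜 (lowOrderSpan 𝕜 e f l y) :=
    fun x hx l hl => (hW x hx).2 l (Finset.mem_range_succ_iff.2 hl)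
  refine ⟨W, fun x hx => (hW x hx).1, hWopen, ⟨y, hyW⟩, k, hk, finrank 𝕜 (lowOrderSpan 𝕜 e f k y),
    fun x hx => hrank x hx k hk.le, fun x hx => ?_⟩
  refine Submodule.eq_of_le_of_finrank_eq (lowOrderSpan_mono e f x k.le_succ) ?_
  rw [hrank x hx k hk.le, hrank x hx (k + 1) hk, hky]

theorem exists_mem_lowOrderSpan_eq_top {O : Set E} (hO : IsOpen O) (hne : O.Nonempty)
    (hf : ContDiffOn 𝕜 ∞ f O)
    (hdense : O ⊆ closure {x | Submodule.span 𝕜 {v | ∃ L, v = iteratedDirDeriv 𝕜 e L f x} = ⊤}) :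
    ∃ x ∈ O, lowOrderSpan 𝕜 e f (finrank 𝕜 F) x = ⊤ := by
  by_contra! hproper
  obtain ⟨W, hWO, hW, ⟨y, hy⟩, k, hk, d, hrank, hstable⟩ :=
    exists_forall_lowOrderSpan_eq_succ hO hne hf fun x hx =>
      Submodule.finrank_lt (hproper x hx)
  obtain ⟨x, hxW, hx⟩ := mem_closure_iff.1 (hdense (hWO hy)) W hW hy
  refine hproper x (hWO hxW) (eq_top_iff.2 (hx.symm.trans_le (Submodule.span_le.2 ?_)))
  rintro _ ⟨L, rfl⟩
  exact lowOrderSpan_mono e f x hk.le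
    (iteratedDirDeriv_mem_lowOrderSpan_of_stable hW (hf.mono hWO) hrank hstable L x hxW)

theorem derivatives_span_of_low_order_general (hΩ : IsOpen Ω) (hf : ContDiffOn 𝕜 ∞ f Ω)
    (h : Ω ⊆ closure {x | Submodule.span 𝕜 {v | ∃ L, v = iteratedDirDeriv 𝕜 e L f x} = ⊤}) :
    ∃ U : Set E, IsOpen U ∧ U ⊆ Ω ∧ Ω ⊆ closure U ∧ ∀ x ∈ U, Submodule.span 𝕜
      {v | ∃ L : List ι, L.length ≤ finrank 𝕜 F - 1 ∧ v = iteratedDirDeriv 𝕜 e L f x} = ⊤ := by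
  refine ⟨{x ∈ Ω | lowOrderSpan 𝕜 e f (finrank 𝕜 F) x = ⊤},
    isOpen_setOf_lowOrderSpan_eq_top hΩ hf _, sep_subset _ _, fun x hx => ?_, fun x hx => ?_⟩
  · refine mem_closure_iff.2 fun O hO hxO => ?_
    obtain ⟨y, ⟨hyO, hyΩ⟩, hy⟩ := exists_mem_lowOrderSpan_eq_top (hO.inter hΩ) ⟨x, hxO, hx⟩
      (hf.mono inter_subset_right) (inter_subset_right.trans h)
    exact ⟨y, hyO, hyΩ, hy⟩
  · refine eq_top_iff.2 (hx.2.symm.trans_le (Submodule.span_mono ?_))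
    rintro _ ⟨⟨L, hL⟩, rfl⟩
    exact ⟨L, Nat.le_sub_one_of_lt hL, rfl⟩

end DirectionalDerivatives

theorem add_mem_ball_of_norm_lt {E : Type*} [SeminormedAddCommGroup E] {c x y : E} {r R : ℝ}
    (hx : x ∈ ball c r) (hy : ‖y‖ < R - r) : x + y ∈ ball c R := by
  rw [mem_ball]
  calc dist (x + y) c ≤ dist (x + y) x + dist x c := dist_triangle _ _ _
    _ < R := by
      rw [dist_self_add_left]
      linarith [mem_ball.1 hx]

section DifferenceQuotients

variable {𝕜 E F : Type*} [NontriviallyNormedField 𝕜] [IsRCLikeNormedField 𝕜]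
  [NormedAddCommGroup E] [NormedSpace ℝ E] [NormedSpace 𝕜 E] [NormedAddCommGroup F]
  [NormedSpace 𝕜 F] {f : E → F} {f' : E → E →L[𝕜] F} {K : NNReal}

theorem norm_sub_sub_hasFDerivAt_le_of_lipschitzOnWith {s : Set E} (hs : Convex ℝ s)
    (hf : ∀ x ∈ s, HasFDerivAt f (f' x) x) (hK : LipschitzOnWith K f' s) {x y : E} (hx : x ∈ s)
    (hy : y ∈ s) : ‖f y - f x - f' x (y - x)‖ ≤ K * ‖y - x‖ * ‖y - x‖ := by
  have hmem : y ∈ closedBall x ‖y - x‖ := mem_closedBall_iff_norm.2 le_rfl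
  refine (hs.inter (convex_closedBall x ‖y - x‖)).norm_image_sub_le_of_norm_hasFDerivWithin_le'
    (fun z hz => (hf z hz.1).hasFDerivWithinAt) (fun z hz => ?_)
    ⟨hx, mem_closedBall_self (norm_nonneg _)⟩ ⟨hy, hmem⟩
  calc ‖f' z - f' x‖ = dist (f' z) (f' x) := (dist_eq_norm _ _).symm
    _ ≤ K * dist z x := hK.dist_le_mul z hz.1 x hx
    _ ≤ K * ‖y - x‖ := mul_le_mul_of_nonneg_left hz.2 K.2

theorem tendstoUniformlyOn_smul_sub_of_lipschitzOnWith {c : E} {r R : ℝ} (hrR : r < R)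
    (hf : ∀ x ∈ ball c R, HasFDerivAt f (f' x) x) (hK : LipschitzOnWith K f' (ball c R)) (v : E) :
    TendstoUniformlyOn (fun (t : 𝕜) x => t⁻¹ • (f (x + t • v) - f x)) (fun x => f' x v)
      (𝓝[≠] 0) (ball c r) := by
  have hcont : ContinuousAt (fun t : 𝕜 => ‖t • v‖) 0 := by fun_prop
  have hsmall : ∀ᶠ t : 𝕜 in 𝓝 0, ‖t • v‖ < R - r :=
    hcont.eventually (gt_mem_nhds (by simpa using hrR))
  have hlim : Tendsto (fun t : 𝕜 => K * ‖t • v‖ * ‖v‖) (𝓝 0) (𝓝 0) := by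
    have : ContinuousAt (fun t : 𝕜 => K * ‖t • v‖ * ‖v‖) 0 := by fun_prop
    simpa only [ContinuousAt, zero_smul, norm_zero, mul_zero, zero_mul] using this
  refine Metric.tendstoUniformlyOn_iff.2 fun ε hε => ?_
  filter_upwards [nhdsWithin_le_nhds hsmall, nhdsWithin_le_nhds (hlim.eventually (gt_mem_nhds hε)),
    self_mem_nhdsWithin] with t ht htε ht₀ x hx
  have hbound := norm_sub_sub_hasFDerivAt_le_of_lipschitzOnWith (convex_ball c R) hf hK
    (ball_subset_ball hrR.le hx) (add_mem_ball_of_norm_lt hx ht)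
  rw [add_sub_cancel_left, map_smul] at hbound
  calc dist (f' x v) (t⁻¹ • (f (x + t • v) - f x))
      = ‖t‖⁻¹ * ‖f (x + t • v) - f x - t • f' x v‖ := by
        rw [dist_comm, dist_eq_norm, ← norm_inv, ← norm_smul, smul_sub _ _ (t • _),
          inv_smul_smul₀ ht₀]
    _ ≤ ‖t‖⁻¹ * (K * ‖t • v‖ * ‖t • v‖) := by gcongr
    _ = K * ‖t • v‖ * ‖v‖ := by
        have : ‖t‖ ≠ 0 := norm_ne_zero_iff.2 ht₀
        rw [norm_smul]
        field_simp
    _ < ε := htε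

end DifferenceQuotients

section Holomorphic

variable {E F : Type*} [NormedAddCommGroup E] [NormedSpace ℂ E] [NormedAddCommGroup F]
  [NormedSpace ℂ F] {f : E → F} {Ω : Set E} {c : E}

theorem norm_fderiv_le_of_forall_mem_ball_norm_le {r M : ℝ} (hf : DifferentiableOn ℂ f (ball c r))
    (hM : ∀ x ∈ ball c r, ‖f x‖ ≤ M) (hr : 0 < r) : ‖fderiv ℂ f c‖ ≤ 2 * M / r := by
  refine Complex.norm_fderiv_le_div_of_mapsTo_ball hf (fun x hx => ?_) hr
  rw [mem_closedBall, dist_eq_norm, two_mul]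
  exact norm_sub_le_of_le (hM x hx) (hM c (mem_ball_self hr))

theorem locallyLipschitzOn_of_differentiableOn_complex (hΩ : IsOpen Ω)
    (hf : DifferentiableOn ℂ f Ω) : LocallyLipschitzOn Ω f := by
  intro c hc
  have hbound : ∀ᶠ x in 𝓝 c, x ∈ Ω ∧ ‖f x‖ < ‖f c‖ + 1 :=
    (hΩ.eventually_mem hc).and <|
      ((hf.differentiableAt (hΩ.mem_nhds hc)).continuousAt.norm.eventually
        (gt_mem_nhds (lt_add_one _)))
  obtain ⟨R, hR, hball⟩ := Metric.eventually_nhds_iff_ball.1 hbound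
  have hfderiv : ∀ x ∈ ball c (R / 2), ‖fderiv ℂ f x‖ ≤ 2 * (‖f c‖ + 1) / (R / 2) := by
    intro x hx
    have hsub : ball x (R / 2) ⊆ ball c R := ball_subset_ball' (by linarith [mem_ball.1 hx])
    exact norm_fderiv_le_of_forall_mem_ball_norm_le
      (hf.mono fun y hy => (hball y (hsub hy)).1) (fun y hy => (hball y (hsub hy)).2.le)
      (half_pos hR)
  refine ⟨(2 * (‖f c‖ + 1) / (R / 2)).toNNReal, ball c (R / 2),
    mem_nhdsWithin_of_mem_nhds (ball_mem_nhds c (half_pos hR)), ?_⟩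
  refine (convex_ball c (R / 2)).lipschitzOnWith_of_nnnorm_fderiv_le (𝕜 := ℂ) (fun x hx => ?_)
    fun x hx => NNReal.le_toNNReal_of_coe_le (hfderiv x hx)
  exact hf.differentiableAt (hΩ.mem_nhds (hball x (ball_subset_ball (by linarith) hx)).1)

theorem locallyLipschitzOn_fderiv_of_differentiableOn_complex (hΩ : IsOpen Ω)
    (hf : DifferentiableOn ℂ f Ω) : LocallyLipschitzOn Ω (fderiv ℂ f) := by
  intro c hc
  obtain ⟨K, s, hs, hK⟩ := locallyLipschitzOn_of_differentiableOn_complex hΩ hf hc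
  rw [hΩ.nhdsWithin_eq hc] at hs
  obtain ⟨R, hR, hball⟩ := Metric.mem_nhds_iff.1 (inter_mem (hΩ.mem_nhds hc) hs)
  have hadd : ∀ x ∈ ball c (R / 2), ∀ y ∈ ball (0 : E) (R / 2), x + y ∈ Ω ∩ s :=
    fun x hx y hy => hball (add_mem_ball_of_norm_lt hx (by linarith [mem_ball_zero_iff.1 hy]))
  have hdiff : ∀ x ∈ ball c (R / 2), ∀ y ∈ ball (0 : E) (R / 2),
      DifferentiableAt ℂ (fun y => f (x + y)) y := fun x hx y hy =>
    (differentiableAt_comp_add_left x).2 (hf.differentiableAt (hΩ.mem_nhds (hadd x hx y hy).1))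
  refine ⟨(2 * K / (R / 2)).toNNReal, ball c (R / 2),
    mem_nhdsWithin_of_mem_nhds (ball_mem_nhds c (half_pos hR)),
    LipschitzOnWith.of_dist_le_mul fun x hx y hy => ?_⟩
  have h₀ : (0 : E) ∈ ball (0 : E) (R / 2) := mem_ball_self (half_pos hR)
  -- Cauchy's estimate for `w ↦ f (x + w) - f (y + w)`.
  have hcauchy : ‖fderiv ℂ (fun w => f (x + w) - f (y + w)) 0‖ ≤ 2 * (K * dist x y) / (R / 2) := by
    refine norm_fderiv_le_of_forall_mem_ball_norm_le
      (fun w hw => ((hdiff x hx w hw).sub (hdiff y hy w hw)).differentiableWithinAt)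
      (fun w hw => ?_) (half_pos hR)
    simpa only [dist_eq_norm, add_sub_add_right_eq_sub]
      using hK.dist_le_mul _ (hadd x hx w hw).2 _ (hadd y hy w hw).2
  rw [fderiv_fun_sub (hdiff x hx 0 h₀) (hdiff y hy 0 h₀), fderiv_comp_add_left,
    fderiv_comp_add_left, add_zero, add_zero, ← dist_eq_norm] at hcauchy
  rw [Real.coe_toNNReal _ (by positivity)]
  exact hcauchy.trans_eq (by ring)

theorem differentiableOn_of_tendstoUniformlyOn_complex [CompleteSpace F] {α : Type*}
    {l : Filter α} [l.NeBot] {φ : α → E → F} (hΩ : IsOpen Ω)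
    (hφ : ∀ᶠ n in l, DifferentiableOn ℂ (φ n) Ω) (hlim : TendstoUniformlyOn φ f l Ω) :
    DifferentiableOn ℂ f Ω := by
  intro c hc
  obtain ⟨R, hR, hball⟩ := Metric.mem_nhds_iff.1 (hΩ.mem_nhds hc)
  have hcauchy : UniformCauchySeqOn (fun n => fderiv ℂ (φ n)) l (ball c (R / 2)) := by
    intro u hu
    obtain ⟨ε, hε, hεu⟩ := Metric.mem_uniformity_dist.1 hu
    filter_upwards [hlim.uniformCauchySeqOn _ (dist_mem_uniformity (by positivity : 0 < ε * R / 8)),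
      hφ.prod_mk hφ] with ⟨m, n⟩ hmn ⟨hm, hn⟩ x hx
    have hsub : ball x (R / 2) ⊆ Ω :=
      (ball_subset_ball' (by linarith [mem_ball.1 hx])).trans hball
    have hxΩ : Ω ∈ 𝓝 x := hΩ.mem_nhds (hsub (mem_ball_self (half_pos hR)))
    have hle := norm_fderiv_le_of_forall_mem_ball_norm_le ((hm.fun_sub hn).mono hsub)
      (fun y hy => (dist_eq_norm (φ m y) (φ n y)).symm.trans_le (hmn y (hsub hy)).le) (half_pos hR)
    rw [fderiv_fun_sub (hm.differentiableAt hxΩ) (hn.differentiableAt hxΩ), ← dist_eq_norm] at hle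
    refine hεu (hle.trans_lt ?_)
    rw [show 2 * (ε * R / 8) / (R / 2) = ε / 2 by field_simp; norm_num]
    exact half_lt_self hε
  choose! f' hf' using fun x (hx : x ∈ ball c (R / 2)) =>
    cauchy_iff_exists_le_nhds.1 (hcauchy.cauchy_map hx)
  have hmem : ball c (R / 2) ∈ 𝓝 c := ball_mem_nhds c (half_pos hR)
  have hfderiv : TendstoUniformlyOnFilter (fun n => fderiv ℂ (φ n)) f' l (𝓝 c) :=
    (hcauchy.tendstoUniformlyOn_of_tendsto hf').tendstoUniformlyOnFilter.mono_right
      (le_principal_iff.2 hmem)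
  have hderiv : ∀ᶠ n : α × E in l ×ˢ 𝓝 c,
      HasFDerivAt (φ n.1) (fderiv ℂ (φ n.1) n.2) n.2 := by
    filter_upwards [hφ.prod_mk (hΩ.mem_nhds hc)] with n ⟨hn, hx⟩
    exact (hn.differentiableAt (hΩ.mem_nhds hx)).hasFDerivAt
  exact (hasFDerivAt_of_tendstoUniformlyOnFilter hfderiv hderiv
    (eventually_of_mem (hΩ.mem_nhds hc) fun x hx => hlim.tendsto_at hx)).differentiableAt
      |>.differentiableWithinAt

theorem differentiableOn_fderiv_apply_complex [CompleteSpace F] (hΩ : IsOpen Ω)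
    (hf : DifferentiableOn ℂ f Ω) (v : E) : DifferentiableOn ℂ (fun x => fderiv ℂ f x v) Ω := by
  intro c hc
  obtain ⟨K, s, hs, hK⟩ := locallyLipschitzOn_fderiv_of_differentiableOn_complex hΩ hf hc
  rw [hΩ.nhdsWithin_eq hc] at hs
  obtain ⟨R, hR, hball⟩ := Metric.mem_nhds_iff.1 (inter_mem (hΩ.mem_nhds hc) hs)
  have hdiff : ∀ x ∈ ball c R, DifferentiableAt ℂ f x := fun x hx =>
    hf.differentiableAt (hΩ.mem_nhds (hball hx).1)
  have hcont : ContinuousAt (fun t : ℂ => ‖t • v‖) 0 := by fun_prop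
  have hsmall : ∀ᶠ t : ℂ in 𝓝 0, ‖t • v‖ < R / 2 :=
    hcont.eventually (gt_mem_nhds (by simpa using hR))
  have hquot : ∀ᶠ t : ℂ in 𝓝[≠] 0,
      DifferentiableOn ℂ (fun x => t⁻¹ • (f (x + t • v) - f x)) (ball c (R / 2)) := by
    filter_upwards [nhdsWithin_le_nhds hsmall] with t ht x hx
    have hxt : x + t • v ∈ ball c R := add_mem_ball_of_norm_lt hx (by linarith)
    have hshift := (differentiableAt_comp_add_right (t • v)).2 (hdiff _ hxt)
    exact ((hshift.sub (hdiff x (ball_subset_ball (half_le_self hR.le) hx))).const_smul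
      t⁻¹).differentiableWithinAt
  have hlim := tendstoUniformlyOn_smul_sub_of_lipschitzOnWith (half_lt_self hR)
    (fun x hx => (hdiff x hx).hasFDerivAt) (hK.mono fun x hx => (hball hx).2) v
  exact ((differentiableOn_of_tendstoUniformlyOn_complex isOpen_ball hquot hlim).differentiableAt
    (ball_mem_nhds c (half_pos hR))).differentiableWithinAt

theorem contDiffOn_of_differentiableOn_complex [FiniteDimensional ℂ E] [CompleteSpace F]
    (hΩ : IsOpen Ω) (hf : DifferentiableOn ℂ f Ω) : ContDiffOn ℂ ∞ f Ω := by
  refine contDiffOn_infty.2 fun n => ?_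
  induction n generalizing f with
  | zero => exact contDiffOn_zero.2 hf.continuousOn
  | succ n ih =>
    rw [Nat.cast_add_one]
    refine (contDiffOn_succ_iff_fderiv_of_isOpen hΩ).2 ⟨hf, fun h => ?_, ?_⟩
    · simp at h
    exact contDiffOn_clm_apply.2 fun v => ih (differentiableOn_fderiv_apply_complex hΩ hf v)

end Holomorphic

theorem multiDeriv_eq_iteratedDirDeriv {p N : ℕ} (L : List (Fin p))
    (f : (Fin p → ℂ) → (Fin N → ℂ)) :
    multiDeriv L f = iteratedDirDeriv ℂ (fun j => Pi.single j 1) L f := by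
  induction L with
  | nil => rfl
  | cons j L ih => rw [multiDeriv, iteratedDirDeriv, ih]

/-- If all partial derivatives of a holomorphic `f : Ω ⊆ ℂ^p → ℂ^N` span `ℂ^N`
generically on the connected open set `Ω`, then already the derivatives of order
`≤ N - 1` span `ℂ^N` generically on `Ω`. -/
theorem derivatives_span_of_low_order {p N : ℕ}
    (Ω : Set (Fin p → ℂ)) (hΩ : IsOpen Ω) (hconn : IsConnected Ω)
    (f : (Fin p → ℂ) → (Fin N → ℂ)) (hf : DifferentiableOn ℂ f Ω)
    (h : ∃ U : Set (Fin p → ℂ), IsOpen U ∧ U ⊆ Ω ∧ Ω ⊆ closure U ∧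
      ∀ χ ∈ U, Submodule.span ℂ {v : Fin N → ℂ | ∃ L : List (Fin p), v = multiDeriv L f χ} = ⊤) :
    ∃ U : Set (Fin p → ℂ), IsOpen U ∧ U ⊆ Ω ∧ Ω ⊆ closure U ∧
      ∀ χ ∈ U, Submodule.span ℂ
        {v : Fin N → ℂ | ∃ L : List (Fin p), L.length ≤ N - 1 ∧ v = multiDeriv L f χ} = ⊤ := by
  obtain ⟨U, -, -, hdense, hU⟩ := h
  simp only [multiDeriv_eq_iteratedDirDeriv] at hU ⊢
  simpa only [finrank_fin_fun] using derivatives_span_of_low_order_general hΩ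
    (contDiffOn_of_differentiableOn_complex hΩ hf) (hdense.trans (closure_mono hU))
end

section
/- Let R : Δ_ε × V → ℂ be a function, where Δ_ε = {t ∈ ℂ : |t| < ε} and V is a neighborhood of 0 in a real analytic hypersurface M ⊂ ℂ^N, such that R is smooth, holomorphic in t for each fixed Z, R(t,0) ≡ 0, and for each t ∈ Δ_ε the function Z ↦ R(t,Z) extends holomorphically to some neighborhood O_t of 0 in ℂ^N (depending on t). Then there exist η > 0, t_0 ∈ Δ_ε, and a neighborhood O of 0 in ℂ^N such that R extends holomorphically to {t : |t − t_0| < η} × O. -/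
/-!
For each `q`, let `S q` be the set of `t` for which `R t` extends to a holomorphic function bounded
by `q` on the ball of radius `1 / (q + 1)`. By Montel's theorem `S q` is closed, and these sets
cover the parameter domain, so by Baire's theorem one of them contains a closed disc. On its
boundary circle the extensions `g z` are uniformly bounded, but they are not unique and need not
depend measurably on `z`, so Cauchy's formula cannot be used to integrate them. Instead, at
finitely many points `(t, Z)` it exhibits `R t Z` as an average of the holomorphic functions
`(t, Z) ↦ (z - c) / (z - t) • g z Z`, hence as the values of a member of a compact convex set of
holomorphic functions. Compactness then gives one member that has the right values everywhere.
-/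

open Filter MeasureTheory Metric Real Set Topology

section PointwiseConvergence

theorem isClosed_setOf_exists_mem_eqOn {T α F : Type*} [TopologicalSpace T] [TopologicalSpace F]
    [T2Space F] {K : Set (α → F)} (hK : IsCompact K) {S : Set α} {R : T → α → F}
    (hR : ∀ x ∈ S, Continuous fun t ↦ R t x) : IsClosed {t | ∃ g ∈ K, EqOn g (R t) S} := by
  have : CompactSpace K := isCompact_iff_compactSpace.1 hK
  have hclosed : IsClosed {p : T × K | EqOn p.2 (R p.1) S} := by
    simp only [EqOn, ofPred_forall]
    refine isClosed_iInter fun x ↦ isClosed_iInter fun hx ↦ isClosed_eq ?_ ?_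
    · exact (continuous_apply x).comp (continuous_subtype_val.comp continuous_snd)
    · exact (hR x hx).comp continuous_fst
  convert isClosedMap_fst_of_compactSpace _ hclosed
  ext t
  simp

theorem exists_mem_eqOn_average {Ω α F : Type*} [MeasurableSpace Ω] {μ : Measure Ω}
    [IsFiniteMeasure μ] [NeZero μ] [NormedAddCommGroup F] [NormedSpace ℝ F] [CompleteSpace F]
    {K : Set (α → F)} (hK : IsCompact K) (hconv : Convex ℝ K) {S : Set α} {f : Ω → α → F}
    (hf : ∀ x ∈ S, Integrable (fun ω ↦ f ω x) μ) (hmem : ∀ᵐ ω ∂μ, ∃ g ∈ K, EqOn g (f ω) S) :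
    ∃ g ∈ K, EqOn g (fun x ↦ ⨍ ω, f ω x ∂μ) S := by
  suffices (K ∩ ⋂ x : S, {g | g x = ⨍ ω, f ω x ∂μ}).Nonempty by
    obtain ⟨g, hgK, hg⟩ := this
    exact ⟨g, hgK, fun x hx ↦ mem_iInter.1 hg ⟨x, hx⟩⟩
  refine hK.inter_iInter_nonempty _
    (fun x ↦ isClosed_eq (continuous_apply _) continuous_const) fun u ↦ ?_
  let restr : (α → F) →ₗ[ℝ] (u → F) := LinearMap.funLeft ℝ F fun x ↦ x
  have hrestr : Continuous restr := continuous_pi fun x ↦ continuous_apply _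
  have hint (x : u) : Integrable (fun ω ↦ restr (f ω) x) μ := hf x x.1.2
  have havg : ⨍ ω, restr (f ω) ∂μ ∈ restr '' K := by
    refine (hconv.linear_image restr).average_mem (hK.image hrestr).isClosed ?_
      (Integrable.of_eval hint)
    filter_upwards [hmem] with ω ⟨g, hgK, hg⟩
    exact ⟨g, hgK, funext fun x ↦ hg x.1.2⟩
  obtain ⟨g, hgK, hg⟩ := havg
  refine ⟨g, hgK, mem_iInter₂.2 fun x hx ↦ ?_⟩
  calc g x = (⨍ ω, restr (f ω) ∂μ) ⟨x, hx⟩ := congrFun hg ⟨x, hx⟩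
    _ = ⨍ ω, f ω x ∂μ := eval_integral (fun x ↦ (hint x).to_average) _

theorem exists_mem_eqOn_circleAverage {α F : Type*} [NormedAddCommGroup F] [NormedSpace ℝ F]
    [CompleteSpace F] {K : Set (α → F)} (hK : IsCompact K) (hconv : Convex ℝ K) {S : Set α}
    {f : ℂ → α → F} {c : ℂ} {r : ℝ} (hf : ∀ x ∈ S, CircleIntegrable (fun z ↦ f z x) c r)
    (hmem : ∀ z ∈ sphere c |r|, ∃ g ∈ K, EqOn g (f z) S) :
    ∃ g ∈ K, EqOn g (fun x ↦ circleAverage (fun z ↦ f z x) c r) S := by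
  have : NeZero (volume.restrict (uIoc 0 (2 * π))) :=
    ⟨by simp [Measure.restrict_eq_zero, uIoc_of_le two_pi_pos.le, pi_pos]⟩
  have : IsFiniteMeasure (volume.restrict (uIoc 0 (2 * π))) := by
    rw [uIoc]; infer_instance
  simp only [circleAverage_eq_intervalAverage]
  exact exists_mem_eqOn_average hK hconv (fun x hx ↦ intervalIntegrable_iff.1 (hf x hx))
    (Eventually.of_forall fun θ ↦ hmem _ (circleMap_mem_sphere' c r θ))

end PointwiseConvergence

section Montel

theorem hasFDerivAt_of_tendsto_of_norm_sub_sub_le {ι 𝕜 E F : Type*} [NontriviallyNormedField 𝕜]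
    [NormedAddCommGroup E] [NormedSpace 𝕜 E] [NormedAddCommGroup F] [NormedSpace 𝕜 F]
    {l : Filter ι} [l.NeBot] {f : ι → E → F} {f' : ι → E →L[𝕜] F} {g : E → F} {g' : E →L[𝕜] F}
    {c : E} {s : Set E} {K : ℝ} (hs : s ∈ 𝓝 c)
    (hf : ∀ z ∈ s, Tendsto (fun i ↦ f i z) l (𝓝 (g z)))
    (hf' : ∀ v, Tendsto (fun i ↦ f' i v) l (𝓝 (g' v)))
    (hbound : ∀ᶠ i in l, ∀ z ∈ s, ‖f i z - f i c - f' i (z - c)‖ ≤ K * ‖z - c‖ ^ 2) :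
    HasFDerivAt g g' c := by
  have hlimit : ∀ z ∈ s, ‖g z - g c - g' (z - c)‖ ≤ K * ‖z - c‖ ^ 2 := fun z hz ↦
    le_of_tendsto (((hf z hz).sub (hf c (mem_of_mem_nhds hs))).sub (hf' _)).norm
      (hbound.mono fun i hi ↦ hi z hz)
  refine .of_isLittleO <| Asymptotics.IsBigO.trans_isLittleO (.of_bound K ?_)
    (Asymptotics.isLittleO_pow_sub_sub c one_lt_two)
  filter_upwards [hs] with z hz
  simpa using hlimit z hz

variable {E F : Type*} [NormedAddCommGroup E] [NormedSpace ℂ E] [NormedAddCommGroup F]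
  [NormedSpace ℂ F]

theorem norm_sub_sub_fderiv_le_of_mapsTo_ball {f : E → F} {c z : E} {r C : ℝ}
    (hd : DifferentiableOn ℂ f (ball c r)) (hmaps : MapsTo f (ball c r) (closedBall (f c) C))
    (hz : z ∈ ball c r) :
    ‖f z - f c - fderiv ℂ f c (z - c)‖ ≤ 2 * C * (‖z - c‖ / r) ^ 2 := by
  have hr : 0 < r := pos_of_mem_ball hz
  have hfderiv : ‖fderiv ℂ f c‖ ≤ C / r := Complex.norm_fderiv_le_div_of_mapsTo_ball hd hmaps hr
  let h : E → F := fun w ↦ f w - fderiv ℂ f c (w - c)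
  have hsub (w : E) : h w - h c = f w - f c - fderiv ℂ f c (w - c) := by
    simp only [h, sub_self, map_zero, sub_zero]
    abel
  have hh : DifferentiableOn ℂ h (ball c r) := hd.sub (by fun_prop)
  have hh_maps : MapsTo h (ball c r) (closedBall (h c) (2 * C)) := fun w hw ↦ by
    rw [mem_closedBall_iff_norm, hsub]
    have hlinear : ‖fderiv ℂ f c (w - c)‖ ≤ C :=
      calc ‖fderiv ℂ f c (w - c)‖ ≤ C / r * r :=
            (fderiv ℂ f c).le_of_opNorm_le_of_le hfderiv (mem_ball_iff_norm.1 hw).le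
        _ = C := div_mul_cancel₀ C hr.ne'
    linarith [norm_sub_le (f w - f c) (fderiv ℂ f c (w - c)), mem_closedBall_iff_norm.1 (hmaps hw)]
  have ho : (h · - h c) =o[𝓝 c] fun w ↦ ‖w - c‖ ^ 1 := by
    simp only [hsub, pow_one]
    exact (hd.differentiableAt (ball_mem_nhds c hr)).hasFDerivAt.isLittleO.norm_right
  simpa [dist_eq_norm, hsub] using
    Complex.dist_le_mul_div_pow_of_mapsTo_ball_of_isLittleO hh hh_maps ho hz

/-- The maps `E → F` that are holomorphic on `U` and bounded by `C`. The bound is imposed on all of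
`E`, so that values outside `U`, which carry no information, do not spoil compactness in the
topology of pointwise convergence. -/
def boundedHolomorphic (U : Set E) (C : ℝ) : Set (E → F) :=
  {f | DifferentiableOn ℂ f U ∧ ∀ z, ‖f z‖ ≤ C}

variable {U : Set E} {C : ℝ} {f : E → F}

theorem indicator_mem_boundedHolomorphic (hd : DifferentiableOn ℂ f U) (hC : 0 ≤ C)
    (hb : ∀ z ∈ U, ‖f z‖ ≤ C) : U.indicator f ∈ boundedHolomorphic U C := by
  refine ⟨hd.congr fun z hz ↦ indicator_of_mem hz f, fun z ↦ ?_⟩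
  by_cases hz : z ∈ U
  · simpa [hz] using hb z hz
  · simpa [hz] using hC

theorem mapsTo_closedBall_of_mem_boundedHolomorphic (hf : f ∈ boundedHolomorphic U C) (c : E)
    (s : Set E) : MapsTo f s (closedBall (f c) (2 * C)) := fun z _ ↦ by
  rw [mem_closedBall_iff_norm]
  linarith [norm_sub_le (f z) (f c), hf.2 z, hf.2 c]

theorem convex_boundedHolomorphic (U : Set E) (C : ℝ) :
    Convex ℝ (boundedHolomorphic U C : Set (E → F)) := by
  rintro f ⟨hf, hfC⟩ g ⟨hg, hgC⟩ a b ha hb hab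
  refine ⟨(hf.const_smul a).add (hg.const_smul b), fun z ↦ ?_⟩
  exact mem_closedBall_zero_iff.1 <| convex_closedBall (0 : F) C
    (mem_closedBall_zero_iff.2 (hfC z)) (mem_closedBall_zero_iff.2 (hgC z)) ha hb hab

theorem differentiableOn_of_ultrafilter_le_nhds [ProperSpace F] (hU : IsOpen U)
    {u : Ultrafilter (E → F)} (hu : ↑u ≤ 𝓝 f) (hmem : boundedHolomorphic U C ∈ u) :
    DifferentiableOn ℂ f U := by
  intro c hc
  obtain ⟨r, hr, hrU⟩ := isOpen_iff.1 hU c hc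
  have hfderiv : ∀ᶠ g in (u : Filter (E → F)), fderiv ℂ g c ∈ closedBall 0 (2 * C / r) := by
    filter_upwards [hmem] with g hg
    exact mem_closedBall_zero_iff.2 <| Complex.norm_fderiv_le_div_of_mapsTo_ball (hg.1.mono hrU)
      (mapsTo_closedBall_of_mem_boundedHolomorphic hg c _) hr
  obtain ⟨_, ⟨L, -, rfl⟩, hL⟩ :=
    (ContinuousLinearMap.isCompact_image_coe_closedBall (0 : E →L[ℂ] F)
      (2 * C / r)).ultrafilter_le_nhds (u.map fun g ↦ ⇑(fderiv ℂ g c))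
      (le_principal_iff.2 <| hfderiv.mono fun g hg ↦ mem_image_of_mem _ hg)
  have hderiv : HasFDerivAt f L c := by
    refine hasFDerivAt_of_tendsto_of_norm_sub_sub_le (l := (u : Filter (E → F)))
      (f := fun g ↦ g) (K := 2 * (2 * C) / r ^ 2) (ball_mem_nhds c hr)
      (fun z _ ↦ tendsto_pi_nhds.1 hu z) (tendsto_pi_nhds.1 hL) ?_
    filter_upwards [hmem] with g hg z hz
    refine (norm_sub_sub_fderiv_le_of_mapsTo_ball (hg.1.mono hrU)
      (mapsTo_closedBall_of_mem_boundedHolomorphic hg c _) hz).trans_eq ?_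
    ring
  exact hderiv.differentiableAt.differentiableWithinAt

theorem isCompact_boundedHolomorphic [ProperSpace F] (hU : IsOpen U) (C : ℝ) :
    IsCompact (boundedHolomorphic U C : Set (E → F)) := by
  refine (isCompact_univ_pi fun _ ↦ isCompact_closedBall (0 : F) C).of_isClosed_subset
    (isClosed_iff_ultrafilter.2 fun f u hu hmem ↦ ?_)
    fun f hf z _ ↦ mem_closedBall_zero_iff.2 (hf.2 z)
  refine ⟨differentiableOn_of_ultrafilter_le_nhds hU hu hmem, fun z ↦ ?_⟩
  exact le_of_tendsto (tendsto_pi_nhds.1 hu z).norm (mem_of_superset hmem fun g hg ↦ hg.2 z)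

end Montel

section Cauchy

variable {E F : Type*} [NormedAddCommGroup E] [NormedSpace ℂ E] [NormedAddCommGroup F]
  [NormedSpace ℂ F] {c : ℂ} {r s C : ℝ} {O : Set E}

theorem ne_of_mem_sphere_of_mem_ball {X : Type*} [PseudoMetricSpace X] {x y z : X}
    (hsr : s ≤ r) (hy : y ∈ sphere x r) (hz : z ∈ ball x s) : y ≠ z := fun h ↦
  sphere_disjoint_ball.notMem_of_mem_left hy (h ▸ ball_subset_ball hsr hz)

theorem norm_sub_div_sub_le {z t : ℂ} (hsr : s < r) (hz : z ∈ sphere c r) (ht : t ∈ ball c s) :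
    ‖(z - c) / (z - t)‖ ≤ r / (r - s) := by
  have hdist : r - s ≤ ‖z - t‖ := by
    rw [mem_sphere] at hz
    rw [mem_ball] at ht
    rw [← dist_eq_norm]
    linarith [dist_triangle z t c]
  have hr : 0 ≤ r := nonneg_of_mem_sphere hz
  rw [norm_div, mem_sphere_iff_norm.1 hz]
  gcongr

theorem indicator_cauchyKernel_smul_mem_boundedHolomorphic {g : E → F} {z : ℂ} (hsr : s < r)
    (hz : z ∈ sphere c r) (hg : g ∈ boundedHolomorphic O C) :
    (ball c s ×ˢ O).indicator (fun p ↦ ((z - c) / (z - p.1)) • g p.2) ∈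
      boundedHolomorphic (ball c s ×ˢ O) (r / (r - s) * C) := by
  have hr : 0 ≤ r := nonneg_of_mem_sphere hz
  have hC : 0 ≤ C := (norm_nonneg _).trans (hg.2 0)
  have hquot : 0 ≤ r / (r - s) := div_nonneg hr (sub_pos.2 hsr).le
  have hkernel : DifferentiableOn ℂ (fun p : ℂ × E ↦ (z - c) / (z - p.1)) (ball c s ×ˢ O) := by
    have hne : ∀ p ∈ ball c s ×ˢ O, z - p.1 ≠ 0 := fun p hp ↦
      sub_ne_zero.2 (ne_of_mem_sphere_of_mem_ball hsr.le hz hp.1)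
    simp only [div_eq_mul_inv]
    fun_prop (disch := assumption)
  have hsnd : DifferentiableOn ℂ (fun p : ℂ × E ↦ g p.2) (ball c s ×ˢ O) :=
    hg.1.comp differentiableOn_snd fun p hp ↦ hp.2
  refine indicator_mem_boundedHolomorphic (hkernel.smul hsnd) (by positivity) fun p hp ↦ ?_
  rw [norm_smul]
  exact mul_le_mul (norm_sub_div_sub_le hsr hz hp.1) (hg.2 _) (norm_nonneg _) hquot

theorem exists_mem_boundedHolomorphic_prod_eqOn [ProperSpace F] {V : Set E} {R : ℂ → E → F}
    (hr : 0 < r) (hsr : s < r) (hO : IsOpen O) (hVO : V ⊆ O)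
    (hR : ∀ Z ∈ V, DifferentiableOn ℂ (fun t ↦ R t Z) (closedBall c r))
    (hext : ∀ z ∈ sphere c r, ∃ g ∈ boundedHolomorphic O C, EqOn g (R z) V) :
    ∃ G ∈ boundedHolomorphic (ball c s ×ˢ O) (r / (r - s) * C),
      EqOn G (fun p ↦ R p.1 p.2) (ball c s ×ˢ V) := by
  let f : ℂ → ℂ × E → F := fun z p ↦ ((z - c) / (z - p.1)) • R z p.2
  have hfint : ∀ p ∈ ball c s ×ˢ V, CircleIntegrable (fun z ↦ f z p) c r := fun p hp ↦ by
    have hkernel : ContinuousOn (fun z ↦ (z - c) / (z - p.1)) (sphere c r) :=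
      .div (by fun_prop) (by fun_prop) fun z hz ↦
        sub_ne_zero.2 (ne_of_mem_sphere_of_mem_ball hsr.le hz hp.1)
    exact (hkernel.smul ((hR p.2 hp.2).continuousOn.mono sphere_subset_closedBall)).circleIntegrable
      hr.le
  have hfmem : ∀ z ∈ sphere c |r|, ∃ g ∈ boundedHolomorphic (ball c s ×ˢ O) (r / (r - s) * C),
      EqOn g (f z) (ball c s ×ˢ V) := fun z hz ↦ by
    rw [abs_of_pos hr] at hz
    obtain ⟨g, hg, hgR⟩ := hext z hz
    refine ⟨_, indicator_cauchyKernel_smul_mem_boundedHolomorphic hsr hz hg, fun p hp ↦ ?_⟩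
    rw [indicator_of_mem (mk_mem_prod hp.1 (hVO hp.2)), hgR hp.2]
  obtain ⟨G, hG, hGf⟩ := exists_mem_eqOn_circleAverage
    (isCompact_boundedHolomorphic (isOpen_ball.prod hO) _) (convex_boundedHolomorphic _ _)
    hfint hfmem
  refine ⟨G, hG, fun p hp ↦ (hGf hp).trans ?_⟩
  have hdiff : DiffContOnCl ℂ (fun t ↦ R t p.2) (ball c |r|) := by
    rw [abs_of_pos hr]
    exact (hR p.2 hp.2).diffContOnCl_ball Subset.rfl
  exact hdiff.circleAverage_smul_div (by rw [abs_of_pos hr]; exact ball_subset_ball hsr.le hp.1)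

end Cauchy

section Extension

variable {E F : Type*} [NormedAddCommGroup E] [NormedSpace ℂ E] [NormedAddCommGroup F]
  [NormedSpace ℂ F]

theorem eventually_indicator_ball_mem_boundedHolomorphic {O : Set E} {g : E → F} {a : E}
    (hO : O ∈ 𝓝 a) (hg : DifferentiableOn ℂ g O) :
    ∀ᶠ q : ℕ in atTop, ball a (1 / (q + 1)) ⊆ O ∧
      (ball a (1 / (q + 1))).indicator g ∈ boundedHolomorphic (ball a (1 / (q + 1))) q := by
  have hbound : ∀ᶠ Z in 𝓝 a, ‖g Z‖ < ‖g a‖ + 1 :=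
    (hg.differentiableAt hO).continuousAt.norm.eventually_lt_const (lt_add_one _)
  obtain ⟨r, hr, hball⟩ := eventually_nhds_iff_ball.1 (hbound.and hO)
  filter_upwards [tendsto_one_div_add_atTop_nhds_zero_nat.eventually_lt_const hr,
    tendsto_natCast_atTop_atTop.eventually_ge_atTop (‖g a‖ + 1)] with q hqr hqg
  have hsub : ball a (1 / ((q : ℝ) + 1)) ⊆ ball a r := ball_subset_ball hqr.le
  have hsubO : ball a (1 / ((q : ℝ) + 1)) ⊆ O := fun Z hZ ↦ (hball Z (hsub hZ)).2
  exact ⟨hsubO, indicator_mem_boundedHolomorphic (hg.mono hsubO) q.cast_nonneg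
    fun Z hZ ↦ (hball Z (hsub hZ)).1.le.trans hqg⟩

variable [ProperSpace F]

theorem exists_isOpen_forall_exists_mem_boundedHolomorphic {T : Type*} [TopologicalSpace T]
    [BaireSpace T] [Nonempty T] {a : E} {V : Set E} {R : T → E → F}
    (hR : ∀ Z ∈ V, Continuous fun t ↦ R t Z)
    (hext : ∀ t, ∃ O ∈ 𝓝 a, ∃ g : E → F, DifferentiableOn ℂ g O ∧ EqOn g (R t) (O ∩ V)) :
    ∃ W : Set T, IsOpen W ∧ W.Nonempty ∧ ∃ ρ > 0, ∃ C, ∀ t ∈ W,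
      ∃ g ∈ boundedHolomorphic (ball a ρ) C, EqOn g (R t) (ball a ρ ∩ V) := by
  let S (q : ℕ) : Set T := {t | ∃ g ∈ boundedHolomorphic (ball a (1 / (q + 1))) q,
    EqOn g (R t) (ball a (1 / (q + 1)) ∩ V)}
  have hclosed (q : ℕ) : IsClosed (S q) :=
    isClosed_setOf_exists_mem_eqOn (isCompact_boundedHolomorphic isOpen_ball _)
      fun Z hZ ↦ hR Z hZ.2
  have hcover : ⋃ q, S q = univ := eq_univ_of_forall fun t ↦ by
    obtain ⟨O, hO, g, hg, hgR⟩ := hext t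
    obtain ⟨q, hqO, hgq⟩ := (eventually_indicator_ball_mem_boundedHolomorphic hO hg).exists
    refine mem_iUnion.2 ⟨q, _, hgq, fun Z hZ ↦ ?_⟩
    rw [indicator_of_mem hZ.1, hgR ⟨hqO hZ.1, hZ.2⟩]
  obtain ⟨q, hq⟩ := nonempty_interior_of_iUnion_of_closed hclosed hcover
  exact ⟨interior (S q), isOpen_interior, hq, 1 / (q + 1), by positivity, q,
    fun _ ht ↦ interior_subset (s := S q) ht⟩

theorem holomorphic_extension_in_both_variables_general {Ω : Set ℂ} (hΩ : IsOpen Ω)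
    (hne : Ω.Nonempty) {a : E} {V : Set E} {R : ℂ → E → F}
    (hR : ∀ Z ∈ V, DifferentiableOn ℂ (fun t ↦ R t Z) Ω)
    (hext : ∀ t ∈ Ω, ∃ (O : Set E) (g : E → F),
      IsOpen O ∧ a ∈ O ∧ DifferentiableOn ℂ g O ∧ EqOn g (R t) (O ∩ V)) :
    ∃ (η : ℝ) (t₀ : ℂ) (O : Set E), 0 < η ∧ t₀ ∈ Ω ∧ IsOpen O ∧ a ∈ O ∧
      ∃ G : ℂ × E → F, DifferentiableOn ℂ G (ball t₀ η ×ˢ O) ∧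
        EqOn G (fun p ↦ R p.1 p.2) (ball t₀ η ×ˢ (O ∩ V)) := by
  have : BaireSpace Ω := hΩ.baireSpace
  have : Nonempty Ω := hne.to_subtype
  have hext_nhds (t : Ω) :
      ∃ O ∈ 𝓝 a, ∃ g : E → F, DifferentiableOn ℂ g O ∧ EqOn g (R t) (O ∩ V) :=
    let ⟨O, g, hO, ha, hg, hgR⟩ := hext t t.2
    ⟨O, hO.mem_nhds ha, g, hg, hgR⟩
  obtain ⟨W, hW, ⟨t₀, ht₀⟩, ρ, hρ, C, hWext⟩ :=
    exists_isOpen_forall_exists_mem_boundedHolomorphic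
      (fun Z hZ ↦ (hR Z hZ).continuousOn.domRestrict) hext_nhds
  obtain ⟨r, hr, hrW⟩ := nhds_basis_closedBall.mem_iff.1
    ((hΩ.isOpenMap_subtype_val W hW).mem_nhds (mem_image_of_mem _ ht₀))
  have hrΩ : closedBall (t₀ : ℂ) r ⊆ Ω := hrW.trans (Subtype.coe_image_subset Ω W)
  have hcircle : ∀ z ∈ sphere (t₀ : ℂ) r,
      ∃ g ∈ boundedHolomorphic (ball a ρ) C, EqOn g (R z) (ball a ρ ∩ V) := fun z hz ↦ by
    obtain ⟨t, htW, rfl⟩ := hrW (sphere_subset_closedBall hz)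
    exact hWext t htW
  obtain ⟨G, hG, hGR⟩ := exists_mem_boundedHolomorphic_prod_eqOn hr (half_lt_self hr) isOpen_ball
    inter_subset_left (fun Z hZ ↦ (hR Z hZ.2).mono hrΩ) hcircle
  exact ⟨r / 2, t₀, ball a ρ, half_pos hr, t₀.2, isOpen_ball, mem_ball_self hρ, G, hG.1, hGR⟩

end Extension

/-- Lemma 5.10: let `M` be a real analytic hypersurface through `0` in `ℂ^N`, `V` a
neighborhood of `0` in `M`, and `R(t,Z)` a smooth function on `Δ_ε × V`, holomorphic in
`t`, with `R(t,0) ≡ 0`, such that for each fixed `t ∈ Δ_ε` the function `Z ↦ R(t,Z)`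
extends holomorphically to some neighborhood `O_t` of `0` in `ℂ^N`.  Then there exist
`η > 0`, `t₀ ∈ Δ_ε` and a neighborhood `O` of `0` in `ℂ^N` such that `R` extends
holomorphically to `{|t - t₀| < η} × O`. -/
theorem holomorphic_extension_in_both_variables {N : ℕ}
    (M : Set (Fin N → ℂ))
    (hM : ∃ (U : Set (Fin N → ℂ)) (ρ : (Fin N → ℂ) → ℝ), IsOpen U ∧ (0 : Fin N → ℂ) ∈ U ∧
      AnalyticOnNhd ℝ ρ U ∧ M = {Z ∈ U | ρ Z = 0} ∧ ∀ Z ∈ M, fderiv ℝ ρ Z ≠ 0)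
    (ε : ℝ) (hε : 0 < ε)
    (V : Set (Fin N → ℂ)) (hV0 : (0 : Fin N → ℂ) ∈ V)
    (hVnbhd : ∃ W : Set (Fin N → ℂ), IsOpen W ∧ (0 : Fin N → ℂ) ∈ W ∧ V = M ∩ W)
    (R : ℂ → (Fin N → ℂ) → ℂ)
    (hsmooth : ContDiffOn ℝ (⊤ : ℕ∞) (fun q : ℂ × (Fin N → ℂ) => R q.1 q.2)
      (Metric.ball (0 : ℂ) ε ×ˢ V))
    (hholo_t : ∀ Z ∈ V, DifferentiableOn ℂ (fun t => R t Z) (Metric.ball (0 : ℂ) ε))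
    (hR0 : ∀ t ∈ Metric.ball (0 : ℂ) ε, R t 0 = 0)
    (hext : ∀ t ∈ Metric.ball (0 : ℂ) ε, ∃ (O : Set (Fin N → ℂ)) (g : (Fin N → ℂ) → ℂ),
      IsOpen O ∧ (0 : Fin N → ℂ) ∈ O ∧ DifferentiableOn ℂ g O ∧ ∀ Z ∈ O ∩ V, g Z = R t Z) :
    ∃ (η : ℝ) (t₀ : ℂ) (O : Set (Fin N → ℂ)), 0 < η ∧ t₀ ∈ Metric.ball (0 : ℂ) ε ∧
      IsOpen O ∧ (0 : Fin N → ℂ) ∈ O ∧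
      ∃ G : ℂ × (Fin N → ℂ) → ℂ, DifferentiableOn ℂ G (Metric.ball t₀ η ×ˢ O) ∧
        ∀ t ∈ Metric.ball t₀ η ∩ Metric.ball (0 : ℂ) ε, ∀ Z ∈ O ∩ V, G (t, Z) = R t Z := by
  obtain ⟨η, t₀, O, hη, ht₀, hO, h0, G, hG, hGR⟩ :=
    holomorphic_extension_in_both_variables_general isOpen_ball ⟨0, mem_ball_self hε⟩ hholo_t hext
  exact ⟨η, t₀, O, hη, ht₀, hO, h0, G, hG, fun t ht Z hZ ↦ hGR (mk_mem_prod ht.1 hZ)⟩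
end
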